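/- For every integer n ≥ 2, the number of partitions of n in which no even part is repeated, at least one part equals 1, the largest part is odd, and either the largest part appears at least twice or the largest part minus 1 also occurs as a part, equals the number of partitions of n in which no even part is repeated, no part equals 1, and either the largest part is even, or the largest part is odd, appears exactly once, and the largest part minus 1 does not occur as a part. -/

import Mathlib

/-- No even part is repeated (all even parts are distinct). -/
def EvenDistinct {n : ℕ} (p : n.Partition) : Prop :=
  ∀ i, Even i → p.parts.count i ≤ 1

/-- No odd part is repeated (all odd parts are distinct). -/
def OddDistinct {n : ℕ} (p : n.Partition) : Prop :=
  ∀ i, Odd i → p.parts.count i ≤ 1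

/-- The largest part of a partition (0 for the empty partition of 0). -/
def maxPart {n : ℕ} (p : n.Partition) : ℕ := p.parts.sup

theorem aux_decomp (s : Multiset ℕ) (hs : s ≠ 0) :
    ∃ t, s = s.sup ::ₘ t ∧ ∀ x ∈ t, x ≤ s.sup := by
  have hmem : s.sup ∈ s := by
    induction s using Multiset.induction with
    | empty => exact absurd rfl hs
    | cons a t ih =>
      by_cases ht : t = 0
      · subst ht; simp
      · have := ih ht
        rw [Multiset.sup_cons]
        rcases le_total a t.sup with h | h
        · rw [sup_eq_right.2 h]; exact Multiset.mem_cons_of_mem this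
        · rw [sup_eq_left.2 h]; exact Multiset.mem_cons_self _ _
  exact ⟨s.erase s.sup, (Multiset.cons_erase hmem).symm,
    fun x hx => Multiset.le_sup (Multiset.mem_of_mem_erase hx)⟩

theorem aux_sup (M : ℕ) (t : Multiset ℕ) (h : ∀ x ∈ t, x ≤ M) : (M ::ₘ t).sup = M := by
  rw [Multiset.sup_cons]
  exact sup_eq_left.2 (Multiset.sup_le.2 h)

def auxOne {m : ℕ} (p : m.Partition) : (m + 1).Partition where
  parts := 1 ::ₘ p.parts
  parts_pos := by
    intro i hi
    rcases Multiset.mem_cons.1 hi with h | h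
    · omega
    · exact p.parts_pos h
  parts_sum := by rw [Multiset.sum_cons, p.parts_sum]; omega

theorem aux_ne {m : ℕ} (hm : 1 ≤ m) (p : m.Partition) : p.parts ≠ 0 := by
  intro h
  have := p.parts_sum
  rw [h] at this
  simp at this
  omega

def auxUp {m : ℕ} (hm : 1 ≤ m) (p : m.Partition) : (m + 1).Partition where
  parts := (p.parts.sup + 1) ::ₘ p.parts.erase p.parts.sup
  parts_pos := by
    intro i hi
    rcases Multiset.mem_cons.1 hi with h | h
    · omega
    · exact p.parts_pos (Multiset.mem_of_mem_erase h)
  parts_sum := by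
    obtain ⟨t, ht, -⟩ := aux_decomp _ (aux_ne hm p)
    have h1 := p.parts_sum
    have h2 : p.parts.erase p.parts.sup = t :=
    (congrArg (fun s => s.erase p.parts.sup) ht).trans (Multiset.erase_cons_head _ _)
    rw [h2, Multiset.sum_cons]
    rw [ht, Multiset.sum_cons] at h1
    omega

theorem auxUp_parts {m : ℕ} (hm : 1 ≤ m) (p : m.Partition) :
    ∃ M t, p.parts = M ::ₘ t ∧ (∀ x ∈ t, x ≤ M) ∧ (auxUp hm p).parts = (M + 1) ::ₘ t := by
  obtain ⟨t, ht, h⟩ := aux_decomp _ (aux_ne hm p)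
  refine ⟨_, t, ht, h, ?_⟩
  have h2 : p.parts.erase p.parts.sup = t :=
    (congrArg (fun s => s.erase p.parts.sup) ht).trans (Multiset.erase_cons_head _ _)
  simp only [auxUp, h2]

/-- The complementary type. -/
def auxY {n : ℕ} (p : n.Partition) : Prop :=
  Even (maxPart p) ∨ (Odd (maxPart p) ∧ p.parts.count (maxPart p) = 1 ∧ maxPart p - 1 ∉ p.parts)

open Classical in
theorem aux_card_one (m : ℕ) :
    (Finset.univ.filter fun p : m.Partition => EvenDistinct p).card =
    (Finset.univ.filter fun p : (m + 1).Partition => EvenDistinct p ∧ 1 ∈ p.parts).card := by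
  refine Finset.card_bij (fun p _ => auxOne p) ?_ ?_ ?_
  · intro p hp
    simp only [Finset.mem_filter, Finset.mem_univ, true_and] at hp ⊢
    refine ⟨fun i hi => ?_, by simp [auxOne]⟩
    have h1 : i ≠ 1 := by rintro rfl; simp at hi
    simp only [auxOne]
    rw [Multiset.count_cons_of_ne h1]
    exact hp i hi
  · intro p _ q _ h
    have := congrArg Nat.Partition.parts h
    simp only [auxOne, Multiset.cons_inj_right] at this
    exact Nat.Partition.ext this
  · intro q hq
    simp only [Finset.mem_filter, Finset.mem_univ, true_and] at hq
    obtain ⟨t, ht⟩ := Multiset.exists_cons_of_mem hq.2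
    refine ⟨⟨t, fun {i} hi => q.parts_pos (by rw [ht]; exact Multiset.mem_cons_of_mem hi), ?_⟩, ?_, ?_⟩
    · have := q.parts_sum
      rw [ht, Multiset.sum_cons] at this
      omega
    · simp only [Finset.mem_filter, Finset.mem_univ, true_and]
      intro i hi
      have := hq.1 i hi
      rw [ht] at this
      exact (Multiset.count_le_count_cons _ _ _).trans this
    · exact Nat.Partition.ext ht.symm

open Classical in
theorem aux_card_up (m : ℕ) (hm : 1 ≤ m) :
    (Finset.univ.filter fun p : m.Partition => EvenDistinct p).card =
    (Finset.univ.filter fun p : (m + 1).Partition => EvenDistinct p ∧ auxY p).card := by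
  refine Finset.card_bij (fun p _ => auxUp hm p) ?_ ?_ ?_
  · intro p hp
    simp only [Finset.mem_filter, Finset.mem_univ, true_and] at hp ⊢
    obtain ⟨M, t, h1, h2, h3⟩ := auxUp_parts hm p
    have hn : M + 1 ∉ t := fun h => by have := h2 _ h; omega
    have hs : ((M + 1) ::ₘ t).sup = M + 1 := aux_sup _ _ fun x hx => (h2 x hx).trans (by omega)
    have hc : ((M + 1) ::ₘ t).count (M + 1) = 1 := by
      rw [Multiset.count_cons_self, Multiset.count_eq_zero_of_notMem hn]
    simp only [EvenDistinct, auxY, maxPart, h1, h3, hs, hc] at hp ⊢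
    refine ⟨fun i hi => ?_, ?_⟩
    · by_cases hiM : i = M + 1
      · rw [hiM, hc]
      · rw [Multiset.count_cons_of_ne hiM]
        exact (Multiset.count_le_count_cons _ _ _).trans (hp i hi)
    · rcases Nat.even_or_odd M with h | h
      · right
        refine ⟨h.add_one, trivial, ?_⟩
        have := hp M h
        rw [Multiset.count_cons_self] at this
        have h0 : M ∉ t := Multiset.count_eq_zero.1 (by omega)
        simp [h0]
      · exact Or.inl h.add_one
  · intro p _ q _ h
    obtain ⟨M, t, h1, h2, h3⟩ := auxUp_parts hm p
    obtain ⟨N, u, k1, k2, k3⟩ := auxUp_parts hm q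
    have e : (M + 1) ::ₘ t = (N + 1) ::ₘ u := by rw [← h3, ← k3, h]
    have e2 := congrArg Multiset.sup e
    rw [aux_sup _ _ fun x hx => (h2 x hx).trans (by omega),
      aux_sup _ _ fun x hx => (k2 x hx).trans (by omega)] at e2
    obtain rfl : M = N := by omega
    rw [Multiset.cons_inj_right] at e
    exact Nat.Partition.ext (by rw [h1, k1, e])
  · intro q hq
    simp only [Finset.mem_filter, Finset.mem_univ, true_and] at hq
    obtain ⟨hE, hY⟩ := hq
    obtain ⟨t, ht, hle⟩ := aux_decomp _ (aux_ne (by omega) q)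
    have hsum := q.parts_sum
    have hpos : ∀ i ∈ q.parts, 0 < i := fun i hi => q.parts_pos hi
    simp only [EvenDistinct, auxY, maxPart] at hE hY
    generalize q.parts.sup = M at *
    rw [ht] at hsum hpos hE hY
    rw [Multiset.sum_cons] at hsum
    have hM : 0 < M := hpos M (by simp)
    have hc : t.count M = 0 := by
      rcases hY with h | ⟨-, h, -⟩
      · have := hE M h
        rw [Multiset.count_cons_self] at this; omega
      · rw [Multiset.count_cons_self] at h; omega
    have hMt : M ∉ t := Multiset.count_eq_zero.1 hc
    have hlt : ∀ x ∈ t, x ≤ M - 1 := fun x hx => by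
      have := hle x hx
      have : x ≠ M := by rintro rfl; exact hMt hx
      omega
    have hM2 : 2 ≤ M := by
      by_contra hcon
      have : t = 0 := Multiset.eq_zero_of_forall_notMem fun x hx => by
        have := hlt x hx
        have := hpos x (Multiset.mem_cons_of_mem hx)
        omega
      rw [this] at hsum
      simp at hsum
      omega
    refine ⟨⟨(M - 1) ::ₘ t, ?_, ?_⟩, ?_, ?_⟩
    · intro i hi
      rcases Multiset.mem_cons.1 hi with h | h
      · omega
      · exact hpos i (Multiset.mem_cons_of_mem h)
    · rw [Multiset.sum_cons]; omega
    · refine Finset.mem_filter.2 ⟨Finset.mem_univ _, ?_⟩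
      intro i hi
      by_cases hiM : i = M - 1
      · have hodd : ¬ Even M := by
          intro h
          rw [hiM] at hi
          rcases hi with ⟨a, ha⟩
          rcases h with ⟨b, hb⟩
          omega
        rcases hY with h | ⟨-, -, h⟩
        · exact absurd h hodd
        · have h0 : M - 1 ∉ t := fun h' => h (Multiset.mem_cons_of_mem h')
          rw [hiM, Multiset.count_cons_self, Multiset.count_eq_zero_of_notMem h0]
      · rw [Multiset.count_cons_of_ne hiM]
        exact (Multiset.count_le_count_cons _ _ _).trans (hE i hi)
    · apply Nat.Partition.ext
      simp only [auxUp]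
      rw [aux_sup _ _ hlt, Multiset.erase_cons_head, ht, Nat.sub_add_cancel (by omega)]

theorem aux_compl {n : ℕ} (hn : 1 ≤ n) (p : n.Partition) :
    (Odd (maxPart p) ∧ (2 ≤ p.parts.count (maxPart p) ∨ maxPart p - 1 ∈ p.parts)) ↔ ¬ auxY p := by
  obtain ⟨t, ht, -⟩ := aux_decomp _ (aux_ne hn p)
  have hc : 1 ≤ p.parts.count (maxPart p) := by
    rw [Multiset.one_le_count_iff_mem, maxPart]
    have h := Multiset.mem_cons_self p.parts.sup t
    rwa [← ht] at h
  unfold auxY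
  rw [← Nat.not_odd_iff_even]
  have : (2 ≤ p.parts.count (maxPart p)) ↔ ¬ (p.parts.count (maxPart p) = 1) := by omega
  rw [this]
  tauto

theorem card_with_one_eq_card_without_one : ∀ n : ℕ, 2 ≤ n →
    Nat.card {p : n.Partition // EvenDistinct p ∧ 1 ∈ p.parts ∧ Odd (maxPart p) ∧
      (2 ≤ p.parts.count (maxPart p) ∨ maxPart p - 1 ∈ p.parts)} =
    Nat.card {p : n.Partition // EvenDistinct p ∧ 1 ∉ p.parts ∧
      ((p.parts ≠ 0 ∧ Even (maxPart p)) ∨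
        (Odd (maxPart p) ∧ p.parts.count (maxPart p) = 1 ∧ maxPart p - 1 ∉ p.parts))} := by
  classical
  intro n hn
  obtain ⟨m, rfl⟩ : ∃ m, n = m + 1 := ⟨n - 1, by omega⟩
  have key := (aux_card_one m).symm.trans (aux_card_up m (by omega))
  rw [Nat.card_eq_fintype_card, Nat.card_eq_fintype_card, Fintype.card_subtype,
    Fintype.card_subtype]
  rw [← Finset.card_filter_add_card_filter_not (s := Finset.univ.filter
      fun p : (m + 1).Partition => EvenDistinct p ∧ 1 ∈ p.parts) auxY,
    ← Finset.card_filter_add_card_filter_not (s := Finset.univ.filter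
      fun p : (m + 1).Partition => EvenDistinct p ∧ auxY p) (fun p => 1 ∈ p.parts),
    Finset.filter_filter, Finset.filter_filter, Finset.filter_filter, Finset.filter_filter] at key
  have e1 : (Finset.univ.filter fun p : (m + 1).Partition =>
      (EvenDistinct p ∧ 1 ∈ p.parts) ∧ auxY p) = Finset.univ.filter fun p : (m + 1).Partition =>
      (EvenDistinct p ∧ auxY p) ∧ 1 ∈ p.parts := by
    apply Finset.filter_congr
    intro p _
    tauto
  rw [e1] at key
  have key2 := Nat.add_left_cancel key
  convert key2 using 2
  · apply Finset.filter_congr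
    intro p _
    rw [aux_compl (by omega), and_assoc]
  · apply Finset.filter_congr
    intro p _
    have hne := aux_ne (by omega) p
    have hs : (p.parts ≠ 0 ∧ Even (maxPart p)) ↔ Even (maxPart p) := ⟨And.right, fun h => ⟨hne, h⟩⟩
    rw [hs]
    exact ⟨fun h => ⟨⟨h.1, h.2.2⟩, h.2.1⟩, fun h => ⟨h.1.1, h.2, h.1.2⟩⟩
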